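/- arXiv:2401.17012 — 2 statements merged into one kernel-verified Lean document; each statement's English description precedes it below -/
import Mathlib

section
/- Let S be an ℝ-submodule of the polynomial ring ℝ[x] that is closed under the bracket ⁅f, g⁆ := f·g′ − g·f′. Then S is infinite-dimensional over ℝ if and only if there exist f, g ∈ S with natDegree f ≥ 2, natDegree g ≥ 2, and natDegree f ≠ natDegree g. -/
/-!
If `f` and `g` have degrees `m` and `n`, the coefficient of `X ^ (m + n - 1)` in `f * g' - g * f'`
is `n - m` times the product of the leading coefficients. In characteristic zero the bracket of
polynomials of different degrees therefore has degree exactly `m + n - 1`, which exceeds `m` as soon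
as `n ≥ 2`. Hence two elements of different degrees `≥ 2` in a bracket-closed submodule allow one to
raise the degree of any given element, and the submodule cannot be finitely generated. Without two
such elements the degrees are bounded.
-/

open Polynomial

theorem coeff_mul_derivative_of_natDegree_le {R : Type*} [Semiring R] {f g : R[X]} {m n : ℕ}
    (hf : f.natDegree ≤ m) (hg : g.natDegree ≤ n) :
    (f * derivative g).coeff (m + n - 1) = f.coeff m * g.coeff n * n := by
  rcases n with _ | n
  · simp [derivative_of_natDegree_zero (Nat.le_zero.mp hg)]
  · have hg' : (derivative g).natDegree ≤ n :=
      (natDegree_derivative_le g).trans (Nat.sub_le_of_le_add hg)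
    rw [Nat.add_succ_sub_one, coeff_mul_add_eq_of_natDegree_le hf hg', coeff_derivative,
      Nat.cast_succ, mul_assoc]

section Wronskian

variable {R : Type*} [CommRing R] {f g : R[X]}

theorem coeff_wronskian_of_natDegree_le {m n : ℕ}
    (hf : f.natDegree ≤ m) (hg : g.natDegree ≤ n) :
    (wronskian f g).coeff (m + n - 1) = (n - m) * (f.coeff m * g.coeff n) := by
  rw [wronskian, coeff_sub, coeff_mul_derivative_of_natDegree_le hf hg, mul_comm (derivative f),
    add_comm m n, coeff_mul_derivative_of_natDegree_le hg hf]
  ring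

variable [NoZeroDivisors R] [CharZero R]

theorem natDegree_wronskian_of_natDegree_ne (hf : f ≠ 0) (hg : g ≠ 0)
    (hne : f.natDegree ≠ g.natDegree) :
    (wronskian f g).natDegree = f.natDegree + g.natDegree - 1 := by
  have hcoeff : (wronskian f g).coeff (f.natDegree + g.natDegree - 1) ≠ 0 := by
    rw [coeff_wronskian_of_natDegree_le le_rfl le_rfl]
    exact mul_ne_zero (sub_ne_zero.mpr (Nat.cast_injective.ne hne.symm))
      (mul_ne_zero (leadingCoeff_ne_zero.mpr hf) (leadingCoeff_ne_zero.mpr hg))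
  have hw : wronskian f g ≠ 0 := fun h ↦ hcoeff (by rw [h, coeff_zero])
  exact natDegree_eq_of_le_of_coeff_ne_zero
    (Nat.le_sub_one_of_lt (natDegree_wronskian_lt_add hw)) hcoeff

theorem natDegree_lt_natDegree_wronskian (hf : f ≠ 0) (hg : 2 ≤ g.natDegree)
    (hne : f.natDegree ≠ g.natDegree) : f.natDegree < (wronskian f g).natDegree := by
  have hg0 : g ≠ 0 := ne_zero_of_natDegree_gt hg
  rw [natDegree_wronskian_of_natDegree_ne hf hg0 hne]
  lia

theorem not_bddAbove_natDegree_of_wronskian_mem {S : Set R[X]}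
    (hS : ∀ f ∈ S, ∀ g ∈ S, wronskian f g ∈ S) (hfS : f ∈ S) (hgS : g ∈ S)
    (hf : 2 ≤ f.natDegree) (hg : 2 ≤ g.natDegree) (hne : f.natDegree ≠ g.natDegree) :
    ¬ BddAbove (natDegree '' S) := by
  intro hbdd
  obtain ⟨p, hpS, hp⟩ := Nat.sSup_mem ⟨_, Set.mem_image_of_mem natDegree hfS⟩ hbdd
  have hmax : ∀ q ∈ S, q.natDegree ≤ p.natDegree := fun q hq ↦
    hp ▸ le_csSup hbdd (Set.mem_image_of_mem natDegree hq)
  have hp0 : p ≠ 0 := ne_zero_of_natDegree_gt (hf.trans (hmax f hfS))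
  have eq_of_two_le : ∀ q ∈ S, 2 ≤ q.natDegree → p.natDegree = q.natDegree := fun q hqS hq ↦ by
    by_contra hpq
    exact (natDegree_lt_natDegree_wronskian hp0 hq hpq).not_ge (hmax _ (hS p hpS q hqS))
  exact hne ((eq_of_two_le f hfS hf).symm.trans (eq_of_two_le g hgS hg))

end Wronskian

theorem bddAbove_natDegree_of_forall_eq {R : Type*} [Semiring R] {S : Set R[X]} {k : ℕ}
    (hS : ∀ f ∈ S, ∀ g ∈ S, k ≤ f.natDegree → k ≤ g.natDegree → f.natDegree = g.natDegree) :
    BddAbove (natDegree '' S) := by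
  by_cases hk : ∃ f ∈ S, k ≤ f.natDegree
  · obtain ⟨f, hfS, hf⟩ := hk
    refine ⟨f.natDegree, Set.forall_mem_image.mpr fun g hgS ↦ ?_⟩
    rcases le_total k g.natDegree with hg | hg
    · exact (hS g hgS f hfS hg hf).le
    · exact hg.trans hf
  · push Not at hk
    exact ⟨k, Set.forall_mem_image.mpr fun g hgS ↦ (hk g hgS).le⟩

theorem exists_le_degreeLE_iff_bddAbove_natDegree {R : Type*} [Semiring R]
    {S : Submodule R R[X]} :
    (∃ N : ℕ, S ≤ degreeLE R N) ↔ BddAbove (natDegree '' (S : Set R[X])) := by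
  simp only [BddAbove, Set.Nonempty, mem_upperBounds, Set.forall_mem_image, SetLike.le_def,
    mem_degreeLE, natDegree_le_iff_degree_le, SetLike.mem_coe]

theorem module_finite_iff_bddAbove_natDegree {R : Type*} [Ring R] [IsNoetherianRing R]
    {S : Submodule R R[X]} :
    Module.Finite R S ↔ BddAbove (natDegree '' (S : Set R[X])) := by
  classical
  rw [← exists_le_degreeLE_iff_bddAbove_natDegree, Module.Finite.iff_fg]
  constructor
  · rintro ⟨s, rfl⟩
    exact span_le_degreeLE_of_finite s.finite_toSet
  · rintro ⟨N, hN⟩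
    have hfg : (degreeLE R N).FG := ⟨_, degreeLE_eq_span_X_pow.symm⟩
    exact hfg.of_le hN

theorem infinite_dim_iff_two_distinct_high_degrees_general {R : Type*} [CommRing R]
    [IsNoetherianRing R] [NoZeroDivisors R] [CharZero R] (S : Submodule R R[X])
    (hclosed : ∀ f ∈ S, ∀ g ∈ S, f * derivative g - g * derivative f ∈ S) :
    ¬ Module.Finite R S ↔
      ∃ f ∈ S, ∃ g ∈ S, 2 ≤ f.natDegree ∧ 2 ≤ g.natDegree ∧
        f.natDegree ≠ g.natDegree := by
  have hwronskian : ∀ f ∈ S, ∀ g ∈ S, wronskian f g ∈ S := fun f hf g hg ↦ by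
    simpa only [wronskian, mul_comm (derivative f)] using hclosed f hf g hg
  rw [module_finite_iff_bddAbove_natDegree]
  constructor
  · contrapose!
    exact bddAbove_natDegree_of_forall_eq
  · rintro ⟨f, hfS, g, hgS, hf, hg, hne⟩
    exact not_bddAbove_natDegree_of_wronskian_mem hwronskian hfS hgS hf hg hne

theorem infinite_dim_iff_two_distinct_high_degrees
    (S : Submodule ℝ ℝ[X])
    (hclosed : ∀ f ∈ S, ∀ g ∈ S, f * derivative g - g * derivative f ∈ S) :
    ¬ FiniteDimensional ℝ S ↔
      ∃ f ∈ S, ∃ g ∈ S, 2 ≤ f.natDegree ∧ 2 ≤ g.natDegree ∧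
        f.natDegree ≠ g.natDegree :=
  infinite_dim_iff_two_distinct_high_degrees_general S hclosed
end

section
/- Let h, a₀, a₁, a₂ be real numbers and let (x, x′), (y, y′), (z, z′), (w, w′) be pairs of real numbers each satisfying the partially implicit Euler step s′ − s = h·(a₀ + a₁·s + a₂·s·s′). Assume 1 − h·a₂·s ≠ 0 for each s ∈ {x, y, z, w}, and assume x − y ≠ 0, w − z ≠ 0, x′ − y′ ≠ 0, and w′ − z′ ≠ 0. Then ((w′ − x′)·(y′ − z′)) / ((x′ − y′)·(w′ − z′)) = ((w − x)·(y − z)) / ((x − y)·(w − z)). -/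
/-!
For a pair `(s, s')` the Euler step is a bilinear equation: the vector `(1, s, s', s * s')` is
orthogonal to a nonzero vector of coefficients depending only on the scheme. Four such pairs
therefore give a singular `4 × 4` matrix. Its determinant is the difference of the two sides of the
cross-multiplied equality of cross-ratios.
-/

open Matrix

/-- The cross-ratio (subharmonic ratio) of four scalars, in the paper's ordering and sign
convention. By `a / 0 = 0` it is meaningful only when `x ≠ y` and `w ≠ z`. -/
def crossRatio {K : Type*} [Field K] (x y z w : K) : K :=
  ((w - x) * (y - z)) / ((x - y) * (w - z))

/-- The monomials `1, s, s', s * s'` of a bilinear equation in `s` and `s'`, so that such an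
equation reads `bilinearMonomials s s' ⬝ᵥ v = 0` for a coefficient vector `v`. -/
def bilinearMonomials {R : Type*} [CommRing R] (s s' : R) : Fin 4 → R :=
  ![1, s, s', s * s']

/-- The coefficients of the partially implicit Euler step with step size `h`, written as a bilinear
equation in the old value `s` and the new value `s'`. -/
def implicitEulerCoeff {R : Type*} [CommRing R] (h a₀ a₁ a₂ : R) : Fin 4 → R :=
  ![h * a₀, 1 + h * a₁, -1, h * a₂]

section CommRing

variable {R : Type*} [CommRing R]

theorem implicitEulerCoeff_ne_zero [Nontrivial R] (h a₀ a₁ a₂ : R) :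
    implicitEulerCoeff h a₀ a₁ a₂ ≠ 0 := fun hv =>
  neg_ne_zero.mpr one_ne_zero (congrFun hv 2)

theorem bilinearMonomials_dotProduct_implicitEulerCoeff_eq_zero_iff (h a₀ a₁ a₂ s s' : R) :
    bilinearMonomials s s' ⬝ᵥ implicitEulerCoeff h a₀ a₁ a₂ = 0 ↔
      s' - s = h * (a₀ + a₁ * s + a₂ * s * s') := by
  have dotProduct_eq : bilinearMonomials s s' ⬝ᵥ implicitEulerCoeff h a₀ a₁ a₂ =
      h * (a₀ + a₁ * s + a₂ * s * s') - (s' - s) := by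
    simp only [bilinearMonomials, implicitEulerCoeff, dotProduct, Fin.sum_univ_four, cons_val]
    ring
  rw [dotProduct_eq, sub_eq_zero, eq_comm]

theorem det_bilinearMonomials (x x' y y' z z' w w' : R) :
    (of ![bilinearMonomials x x', bilinearMonomials y y',
        bilinearMonomials z z', bilinearMonomials w w']).det =
      (w' - x') * (y' - z') * ((x - y) * (w - z)) -
        (w - x) * (y - z) * ((x' - y') * (w' - z')) := by
  rw [det_succ_column_zero]
  simp only [bilinearMonomials, Fin.sum_univ_four, det_fin_three, submatrix_apply, of_apply,
    Fin.succAbove, Fin.reduceCastSucc, Fin.reduceSucc, Fin.reduceLT, ↓reduceIte, Fin.isValue,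
    cons_val, Fin.coe_ofNat_eq_mod]
  ring

theorem det_bilinearMonomials_eq_zero [IsDomain R] {v : Fin 4 → R} (hv : v ≠ 0)
    {x x' y y' z z' w w' : R}
    (hx : bilinearMonomials x x' ⬝ᵥ v = 0) (hy : bilinearMonomials y y' ⬝ᵥ v = 0)
    (hz : bilinearMonomials z z' ⬝ᵥ v = 0) (hw : bilinearMonomials w w' ⬝ᵥ v = 0) :
    (of ![bilinearMonomials x x', bilinearMonomials y y',
        bilinearMonomials z z', bilinearMonomials w w']).det = 0 := by
  refine exists_mulVec_eq_zero_iff.mp ⟨v, hv, funext fun i => ?_⟩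
  fin_cases i
  exacts [hx, hy, hz, hw]

end CommRing

section Field

variable {K : Type*} [Field K]

theorem crossRatio_eq_of_bilinearMonomials_dotProduct_eq_zero {v : Fin 4 → K} (hv : v ≠ 0)
    {x x' y y' z z' w w' : K}
    (hx : bilinearMonomials x x' ⬝ᵥ v = 0) (hy : bilinearMonomials y y' ⬝ᵥ v = 0)
    (hz : bilinearMonomials z z' ⬝ᵥ v = 0) (hw : bilinearMonomials w w' ⬝ᵥ v = 0)
    (hxy : x - y ≠ 0) (hwz : w - z ≠ 0) (hxy' : x' - y' ≠ 0) (hwz' : w' - z' ≠ 0) :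
    crossRatio x' y' z' w' = crossRatio x y z w := by
  have det_eq_zero := det_bilinearMonomials_eq_zero hv hx hy hz hw
  rw [det_bilinearMonomials, sub_eq_zero] at det_eq_zero
  exact (div_eq_div_iff (mul_ne_zero hxy' hwz') (mul_ne_zero hxy hwz)).mpr det_eq_zero

theorem implicit_euler_preserves_cross_ratio_general
    {h a₀ a₁ a₂ : K} {x x' y y' z z' w w' : K}
    (hx : x' - x = h * (a₀ + a₁ * x + a₂ * x * x'))
    (hy : y' - y = h * (a₀ + a₁ * y + a₂ * y * y'))
    (hz : z' - z = h * (a₀ + a₁ * z + a₂ * z * z'))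
    (hw : w' - w = h * (a₀ + a₁ * w + a₂ * w * w'))
    (hxy : x - y ≠ 0) (hwz : w - z ≠ 0) (hxy' : x' - y' ≠ 0) (hwz' : w' - z' ≠ 0) :
    crossRatio x' y' z' w' = crossRatio x y z w := by
  rw [← bilinearMonomials_dotProduct_implicitEulerCoeff_eq_zero_iff] at hx hy hz hw
  exact crossRatio_eq_of_bilinearMonomials_dotProduct_eq_zero
    (implicitEulerCoeff_ne_zero h a₀ a₁ a₂) hx hy hz hw hxy hwz hxy' hwz'

end Field

theorem implicit_euler_preserves_cross_ratio
    (h a₀ a₁ a₂ : ℝ) (x x' y y' z z' w w' : ℝ)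
    (hx : x' - x = h * (a₀ + a₁ * x + a₂ * x * x'))
    (hy : y' - y = h * (a₀ + a₁ * y + a₂ * y * y'))
    (hz : z' - z = h * (a₀ + a₁ * z + a₂ * z * z'))
    (hw : w' - w = h * (a₀ + a₁ * w + a₂ * w * w'))
    (hxd : 1 - h * a₂ * x ≠ 0) (hyd : 1 - h * a₂ * y ≠ 0)
    (hzd : 1 - h * a₂ * z ≠ 0) (hwd : 1 - h * a₂ * w ≠ 0)
    (hxy : x - y ≠ 0) (hwz : w - z ≠ 0)
    (hxy' : x' - y' ≠ 0) (hwz' : w' - z' ≠ 0) :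
    ((w' - x') * (y' - z')) / ((x' - y') * (w' - z')) =
      ((w - x) * (y - z)) / ((x - y) * (w - z)) :=
  implicit_euler_preserves_cross_ratio_general hx hy hz hw hxy hwz hxy' hwz'
end
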